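/- Let σ > 0 and b > 1/2. There exists a constant C > 0, independent of σ, such that for every Schwartz function u : ℝ² → ℂ, with G : ℝ² → ℂ defined by G(ξ,τ) = ξ · ∫_{ℝ⁴} [1 − cosh(σ|ξ|)·sech(σ|ξ₁|)·sech(σ|ξ₂|)·sech(σ|ξ−ξ₁−ξ₂|)] · û(ξ₁,τ₁)·û(ξ₂,τ₂)·û(ξ−ξ₁−ξ₂, τ−τ₁−τ₂) dξ₁ dξ₂ dτ₁ dτ₂, the convolution û ∗ G on ℝ² satisfies ‖û ∗ G‖_{L²(ℝ²)} ≤ C σ² · ( ∫_{ℝ²} (1+|ξ|)^{4} (1+|τ−ξ³|)^{2b} |û(ξ,τ)|² dξ dτ )². -/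

import Mathlib

/-!
By the addition formula, `1 - cosh (x + y + z) sech x sech y sech z` equals
`-(tanh x tanh y + tanh y tanh z + tanh x tanh z)`, so `|tanh x| ≤ |x|` yields the factor `σ²` at
the cost of two frequencies. Together with the derivative `ξ = ξ₁ + ξ₂ + ξ₃` this makes three
powers of frequency spread over three factors, at most two of them on any one factor. In the
resulting fourfold convolution the factor carrying two powers is put in `L²` and the others,
carrying at most one, in `L¹` (Young). The loss from `L²` to `L¹` is paid by Cauchy–Schwarz with
the weight `⟨ξ⟩⁻¹ ⟨τ - φ(ξ)⟩⁻ᵇ`, which is square integrable exactly because `b > 1/2`; translating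
`τ` shows that its norm does not depend on the dispersion relation `φ`.
-/

open MeasureTheory ENNReal

section Symbol

lemma abs_tanh_le_abs (x : ℝ) : |Real.tanh x| ≤ |x| := by
  have abs_sinh_le : |Real.sinh x| ≤ Real.cosh x * |x| := by
    simpa using (convex_uIcc (-x) x).norm_image_sub_le_of_norm_deriv_le
      (fun y _ ↦ Real.differentiable_sinh y)
      (fun y hy ↦ by
        rw [Real.deriv_sinh, Real.norm_of_nonneg (Real.cosh_pos y).le, Real.cosh_le_cosh]
        grind [Set.mem_uIcc])
      (by grind [Set.mem_uIcc] : (0 : ℝ) ∈ Set.uIcc (-x) x) Set.right_mem_uIcc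
  rw [Real.tanh_eq_sinh_div_cosh, abs_div, abs_of_pos (Real.cosh_pos x),
    div_le_iff₀' (Real.cosh_pos x)]
  exact abs_sinh_le

lemma one_sub_cosh_add_add_mul_inv_cosh (x y z : ℝ) :
    1 - Real.cosh (x + y + z) * (Real.cosh x)⁻¹ * (Real.cosh y)⁻¹ * (Real.cosh z)⁻¹ =
      -(Real.tanh x * Real.tanh y + Real.tanh y * Real.tanh z + Real.tanh x * Real.tanh z) := by
  have hx := (Real.cosh_pos x).ne'
  have hy := (Real.cosh_pos y).ne'
  have hz := (Real.cosh_pos z).ne'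
  simp only [Real.tanh_eq_sinh_div_cosh, Real.cosh_add, Real.sinh_add]
  field_simp
  ring

/-- The Fourier multiplier of the commutator of cubing with `cosh (σ|D_x|)`, at output frequency `ξ`
and input frequencies `ξ₁`, `ξ₂`, `ξ - ξ₁ - ξ₂`; `sech` is encoded as `cosh⁻¹`. -/
noncomputable def commutatorSymbol (σ ξ ξ₁ ξ₂ : ℝ) : ℝ :=
  1 - Real.cosh (σ * |ξ|) * (Real.cosh (σ * |ξ₁|))⁻¹ * (Real.cosh (σ * |ξ₂|))⁻¹ *
    (Real.cosh (σ * |ξ - ξ₁ - ξ₂|))⁻¹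

lemma cosh_mul_abs (σ x : ℝ) : Real.cosh (σ * |x|) = Real.cosh (σ * x) := by
  rw [← Real.cosh_abs, abs_mul, abs_abs, ← abs_mul, Real.cosh_abs]

lemma commutatorSymbol_add_add (σ x y z : ℝ) :
    commutatorSymbol σ (x + y + z) x y =
      -(Real.tanh (σ * x) * Real.tanh (σ * y) + Real.tanh (σ * y) * Real.tanh (σ * z) +
        Real.tanh (σ * x) * Real.tanh (σ * z)) := by
  have hz : x + y + z - x - y = z := by ring
  simp only [commutatorSymbol, cosh_mul_abs, hz, mul_add, one_sub_cosh_add_add_mul_inv_cosh]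

lemma enorm_commutatorSymbol_add_add_le (σ x y z : ℝ) :
    ‖commutatorSymbol σ (x + y + z) x y‖ₑ ≤
      ‖σ‖ₑ ^ 2 * (‖x‖ₑ * ‖y‖ₑ + ‖y‖ₑ * ‖z‖ₑ + ‖x‖ₑ * ‖z‖ₑ) := by
  have enorm_tanh_mul_tanh_le (s t : ℝ) :
      ‖Real.tanh (σ * s) * Real.tanh (σ * t)‖ₑ ≤ ‖σ‖ₑ ^ 2 * (‖s‖ₑ * ‖t‖ₑ) := by
    have enorm_tanh_le (r : ℝ) : ‖Real.tanh (σ * r)‖ₑ ≤ ‖σ‖ₑ * ‖r‖ₑ := by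
      rw [← enorm_mul, enorm_le_iff_norm_le]
      exact abs_tanh_le_abs _
    calc ‖Real.tanh (σ * s) * Real.tanh (σ * t)‖ₑ
      _ ≤ (‖σ‖ₑ * ‖s‖ₑ) * (‖σ‖ₑ * ‖t‖ₑ) := by
        rw [enorm_mul]; exact mul_le_mul' (enorm_tanh_le s) (enorm_tanh_le t)
      _ = ‖σ‖ₑ ^ 2 * (‖s‖ₑ * ‖t‖ₑ) := by ring
  rw [commutatorSymbol_add_add, enorm_neg, mul_add, mul_add]
  refine (enorm_add_le _ _).trans (add_le_add ((enorm_add_le _ _).trans (add_le_add ?_ ?_)) ?_) <;>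
    exact enorm_tanh_mul_tanh_le _ _

lemma enorm_mul_enorm_commutatorSymbol_le (σ ξ ξ₁ ξ₂ : ℝ) :
    ‖ξ‖ₑ * ‖commutatorSymbol σ ξ ξ₁ ξ₂‖ₑ ≤
      3 * ‖σ‖ₑ ^ 2 *
        ((1 + ‖ξ₁‖ₑ) ^ 2 * (1 + ‖ξ₂‖ₑ) * (1 + ‖ξ - ξ₁ - ξ₂‖ₑ) +
          (1 + ‖ξ₁‖ₑ) * (1 + ‖ξ₂‖ₑ) ^ 2 * (1 + ‖ξ - ξ₁ - ξ₂‖ₑ) +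
          (1 + ‖ξ₁‖ₑ) * (1 + ‖ξ₂‖ₑ) * (1 + ‖ξ - ξ₁ - ξ₂‖ₑ) ^ 2) := by
  obtain ⟨ξ₃, rfl⟩ : ∃ ξ₃, ξ = ξ₁ + ξ₂ + ξ₃ := ⟨ξ - ξ₁ - ξ₂, by ring⟩
  rw [show ξ₁ + ξ₂ + ξ₃ - ξ₁ - ξ₂ = ξ₃ by ring]
  have le_bracket (x : ℝ) : ‖x‖ₑ ≤ 1 + ‖x‖ₑ := le_add_self
  have one_le_bracket (x : ℝ) : 1 ≤ 1 + ‖x‖ₑ := le_self_add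
  have sum_le : ‖ξ₁ + ξ₂ + ξ₃‖ₑ ≤ (1 + ‖ξ₁‖ₑ) + (1 + ‖ξ₂‖ₑ) + (1 + ‖ξ₃‖ₑ) :=
    (enorm_add_le _ _).trans <| add_le_add ((enorm_add_le _ _).trans <|
      add_le_add (le_bracket ξ₁) (le_bracket ξ₂)) (le_bracket ξ₃)
  have h₁₂ := mul_le_mul' (mul_le_mul' (le_bracket ξ₁) (le_bracket ξ₂)) (one_le_bracket ξ₃)
  have h₂₃ := mul_le_mul' (mul_le_mul' (le_bracket ξ₂) (le_bracket ξ₃)) (one_le_bracket ξ₁)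
  have h₁₃ := mul_le_mul' (mul_le_mul' (le_bracket ξ₁) (le_bracket ξ₃)) (one_le_bracket ξ₂)
  rw [mul_one] at h₁₂ h₂₃ h₁₃
  calc ‖ξ₁ + ξ₂ + ξ₃‖ₑ * ‖commutatorSymbol σ (ξ₁ + ξ₂ + ξ₃) ξ₁ ξ₂‖ₑ
    _ ≤ ((1 + ‖ξ₁‖ₑ) + (1 + ‖ξ₂‖ₑ) + (1 + ‖ξ₃‖ₑ)) * (‖σ‖ₑ ^ 2 *
          ((1 + ‖ξ₁‖ₑ) * (1 + ‖ξ₂‖ₑ) * (1 + ‖ξ₃‖ₑ) + (1 + ‖ξ₂‖ₑ) * (1 + ‖ξ₃‖ₑ) * (1 + ‖ξ₁‖ₑ) +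
            (1 + ‖ξ₁‖ₑ) * (1 + ‖ξ₃‖ₑ) * (1 + ‖ξ₂‖ₑ))) :=
      mul_le_mul' sum_le <| (enorm_commutatorSymbol_add_add_le σ ξ₁ ξ₂ ξ₃).trans <| by gcongr
    _ = _ := by ring

end Symbol

section Convolution

lemma lintegral_mul_rpow_le {α : Type*} [MeasurableSpace α] {μ : Measure α} {f g : α → ℝ≥0∞}
    (hf : AEMeasurable f μ) (hg : AEMeasurable g μ) {p : ℝ} (hp : 1 ≤ p) :
    (∫⁻ a, f a * g a ∂μ) ^ p ≤ (∫⁻ a, f a ∂μ) ^ (p - 1) * ∫⁻ a, f a * g a ^ p ∂μ := by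
  have hp₀ : 0 < p := by positivity
  have lintegral_withDensity {h : α → ℝ≥0∞} (hh : AEMeasurable h μ) :
      ∫⁻ a, h a ∂μ.withDensity f = ∫⁻ a, f a * h a ∂μ :=
    lintegral_withDensity_eq_lintegral_mul₀ hf hh
  have jensen : ∫⁻ a, f a * g a ∂μ ≤
      (∫⁻ a, f a * g a ^ p ∂μ) ^ (1 / p) * (∫⁻ a, f a ∂μ) ^ (1 - 1 / p) := by
    simpa [eLpNorm'_eq_lintegral_enorm, lintegral_withDensity hg,
      lintegral_withDensity (hg.pow_const p)] using
      eLpNorm'_le_eLpNorm'_mul_rpow_measure_univ one_pos hp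
        (hg.mono_ac (withDensity_absolutelyContinuous μ f)).aestronglyMeasurable
  calc (∫⁻ a, f a * g a ∂μ) ^ p
    _ ≤ ((∫⁻ a, f a * g a ^ p ∂μ) ^ (1 / p) * (∫⁻ a, f a ∂μ) ^ (1 - 1 / p)) ^ p := by gcongr
    _ = (∫⁻ a, f a ∂μ) ^ (p - 1) * ∫⁻ a, f a * g a ^ p ∂μ := by
      rw [ENNReal.mul_rpow_of_nonneg _ _ hp₀.le, ← ENNReal.rpow_mul, ← ENNReal.rpow_mul,
        one_div_mul_cancel hp₀.ne', ENNReal.rpow_one, sub_mul, one_div_mul_cancel hp₀.ne',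
        one_mul, mul_comm]

lemma lintegral_prod_prod_prod_comm {X Y : Type*} [MeasureSpace X] [MeasureSpace Y]
    [SFinite (volume : Measure X)] [SFinite (volume : Measure Y)]
    (F : (X × Y) × (X × Y) → ℝ≥0∞) :
    ∫⁻ w : X × X × Y × Y, F ((w.1, w.2.2.1), (w.2.1, w.2.2.2)) = ∫⁻ q, F q := by
  let e : X × X × Y × Y ≃ᵐ (X × Y) × (X × Y) :=
    ((MeasurableEquiv.refl X).prodCongr <| MeasurableEquiv.prodAssoc.symm.trans <|
      (MeasurableEquiv.prodComm.prodCongr (.refl Y)).trans .prodAssoc).trans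
        MeasurableEquiv.prodAssoc.symm
  have he : MeasurePreserving e :=
    (measurePreserving_prodAssoc _ _ _).symm.comp <| (MeasurePreserving.id _).prod <|
      (measurePreserving_prodAssoc _ _ _).comp <|
        (Measure.measurePreserving_swap.prod (.id _)).comp (measurePreserving_prodAssoc _ _ _).symm
  exact (he.lintegral_map_equiv F e).symm

variable {G : Type*} [MeasurableSpace G] {μ : Measure G} {f g h : G → ℝ≥0∞}

section AddGroup

variable [AddGroup G] [MeasurableAdd₂ G] [MeasurableNeg G] [SFinite μ] [μ.IsAddLeftInvariant]

lemma lintegral_lconvolution (hf : AEMeasurable f μ) (hg : AEMeasurable g μ) :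
    ∫⁻ x, (f ⋆ₗ[μ] g) x ∂μ = (∫⁻ x, f x ∂μ) * ∫⁻ x, g x ∂μ := by
  simp only [lconvolution_def]
  rw [lintegral_lintegral_swap (by fun_prop), ← lintegral_mul_const'' _ hf]
  congr 1 with y
  have g_translate : AEMeasurable (fun x ↦ g (-y + x)) μ :=
    hg.comp_quasiMeasurePreserving (measurePreserving_add_left μ (-y)).quasiMeasurePreserving
  rw [lintegral_const_mul'' _ g_translate, lintegral_add_left_eq_self]

lemma lintegral_lconvolution_rpow_le (hf : AEMeasurable f μ) (hg : AEMeasurable g μ) {p : ℝ}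
    (hp : 1 ≤ p) :
    ∫⁻ x, (f ⋆ₗ[μ] g) x ^ p ∂μ ≤ (∫⁻ x, f x ∂μ) ^ p * ∫⁻ x, g x ^ p ∂μ := by
  calc ∫⁻ x, (f ⋆ₗ[μ] g) x ^ p ∂μ
    _ ≤ ∫⁻ x, (∫⁻ y, f y ∂μ) ^ (p - 1) * (f ⋆ₗ[μ] fun y ↦ g y ^ p) x ∂μ :=
      lintegral_mono fun x ↦ lintegral_mul_rpow_le hf (by fun_prop) hp
    _ = (∫⁻ x, f x ∂μ) ^ (p - 1) * ((∫⁻ x, f x ∂μ) * ∫⁻ x, g x ^ p ∂μ) := by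
      rw [lintegral_const_mul'' _ (by fun_prop), lintegral_lconvolution hf (by fun_prop)]
    _ = (∫⁻ x, f x ∂μ) ^ p * ∫⁻ x, g x ^ p ∂μ := by
      rw [← mul_assoc]
      nth_rw 2 [← ENNReal.rpow_one (∫⁻ x, f x ∂μ)]
      rw [← ENNReal.rpow_add_of_nonneg _ _ (sub_nonneg.2 hp) zero_le_one, sub_add_cancel]

lemma eLpNorm_lconvolution_le (hf : AEMeasurable f μ) (hg : AEMeasurable g μ) {p : ℝ≥0∞}
    (hp : 1 ≤ p) (hp_top : p ≠ ∞) :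
    eLpNorm (f ⋆ₗ[μ] g) p μ ≤ (∫⁻ x, f x ∂μ) * eLpNorm g p μ := by
  have hp₀ : p ≠ 0 := (zero_lt_one.trans_le hp).ne'
  have hp_real : 1 ≤ p.toReal := by simpa using ENNReal.toReal_mono hp_top hp
  simp only [eLpNorm_eq_lintegral_rpow_enorm_toReal hp₀ hp_top, enorm_eq_self, one_div]
  rw [ENNReal.rpow_inv_le_iff (by positivity), ENNReal.mul_rpow_of_nonneg _ _ (by positivity),
    ENNReal.rpow_inv_rpow (by positivity)]
  exact lintegral_lconvolution_rpow_le hf hg hp_real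

lemma eLpNorm_lconvolution_lconvolution_le (hf : AEMeasurable f μ) (hg : AEMeasurable g μ)
    (hh : AEMeasurable h μ) {p : ℝ≥0∞} (hp : 1 ≤ p) (hp_top : p ≠ ∞) :
    eLpNorm (f ⋆ₗ[μ] g ⋆ₗ[μ] h) p μ ≤ (∫⁻ x, f x ∂μ) * (∫⁻ x, g x ∂μ) * eLpNorm h p μ := by
  rw [mul_assoc]
  refine (eLpNorm_lconvolution_le hf (by fun_prop) hp hp_top).trans ?_
  gcongr
  exact eLpNorm_lconvolution_le hg hh hp hp_top

end AddGroup

section AddCommGroup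

variable [AddCommGroup G] [MeasurableAdd₂ G] [MeasurableNeg G] [SFinite μ] [μ.IsAddLeftInvariant]

lemma aemeasurable_mul_mul_comp_sub_sub (hf : AEMeasurable f μ) (hg : AEMeasurable g μ)
    (hh : AEMeasurable h μ) (x : G) :
    AEMeasurable (fun q : G × G ↦ f q.1 * g q.2 * h (x - q.1 - q.2)) (μ.prod μ) :=
  (hf.comp_fst.mul hg.comp_snd).mul <| hh.comp_quasiMeasurePreserving <|
    (quasiMeasurePreserving_sub μ μ).comp <|
      QuasiMeasurePreserving.prodMap (quasiMeasurePreserving_sub_left μ x) (.id μ)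

lemma lconvolution_lconvolution_apply (hf : AEMeasurable f μ) (hg : AEMeasurable g μ)
    (hh : AEMeasurable h μ) (x : G) :
    (f ⋆ₗ[μ] g ⋆ₗ[μ] h) x = ∫⁻ q : G × G, f q.1 * g q.2 * h (x - q.1 - q.2) ∂μ.prod μ := by
  rw [lintegral_prod _ (aemeasurable_mul_mul_comp_sub_sub hf hg hh x)]
  simp only [lconvolution_def, neg_add_eq_sub, mul_assoc]
  congr 1 with y
  refine (lintegral_const_mul'' _ (hg.mul ?_)).symm
  exact hh.comp_quasiMeasurePreserving (quasiMeasurePreserving_sub_left μ (x - y))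

end AddCommGroup

end Convolution

section BourgainNorm

lemma lintegral_mul_le_eLpNorm_mul_eLpNorm {α : Type*} [MeasurableSpace α] {μ : Measure α}
    {f g : α → ℝ≥0∞} (hf : AEMeasurable f μ) (hg : AEMeasurable g μ) :
    ∫⁻ a, f a * g a ∂μ ≤ eLpNorm f 2 μ * eLpNorm g 2 μ := by
  simpa [eLpNorm_eq_lintegral_rpow_enorm_toReal] using
    ENNReal.lintegral_mul_le_Lp_mul_Lq μ .two_two hf hg

lemma eLpNorm_mul_comp_sub {g h : ℝ → ℝ≥0∞} (hg : Measurable g) (hh : Measurable h)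
    {φ : ℝ → ℝ} (hφ : Measurable φ) {p : ℝ≥0∞} (hp : p ≠ 0) (hp_top : p ≠ ∞) :
    eLpNorm (fun q : ℝ × ℝ ↦ g q.1 * h (q.2 - φ q.1)) p volume =
      eLpNorm g p volume * eLpNorm h p volume := by
  simp only [eLpNorm_eq_lintegral_rpow_enorm_toReal hp hp_top, enorm_eq_self]
  rw [← ENNReal.mul_rpow_of_nonneg _ _ (by positivity), Measure.volume_eq_prod,
    lintegral_prod _ (by fun_prop), ← lintegral_mul_const _ (by fun_prop)]
  congr 2 with ξ
  simp only [ENNReal.mul_rpow_of_nonneg _ _ toReal_nonneg]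
  rw [lintegral_const_mul _ (by fun_prop),
    lintegral_sub_right_eq_self (fun τ ↦ h τ ^ p.toReal) (φ ξ)]

/-- The `L²(ℝ)` norm of the decaying bracket `⟨x⟩⁻ʳ`, where `⟨x⟩ = 1 + |x|`: the constant paid in
each variable when an `L¹` norm is bounded by a weighted `L²` norm. -/
noncomputable def bracketNorm (r : ℝ) : ℝ≥0∞ :=
  eLpNorm (fun x : ℝ ↦ (1 + ‖x‖ₑ) ^ (-r)) 2 volume

lemma bracketNorm_lt_top {r : ℝ} (hr : 1 / 2 < r) : bracketNorm r < ∞ := by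
  have bracket_sq (x : ℝ) :
      ((1 + ‖x‖ₑ) ^ (-r)) ^ (2 : ℝ) = ENNReal.ofReal ((1 + ‖x‖) ^ (-(2 * r))) := by
    rw [← ENNReal.rpow_mul, ← ENNReal.ofReal_rpow_of_pos (by positivity),
      ENNReal.ofReal_add zero_le_one (norm_nonneg x), ofReal_norm, ENNReal.ofReal_one]
    congr 1
    ring
  refine (eLpNorm_lt_top_iff_lintegral_rpow_enorm_lt_top two_ne_zero ofNat_ne_top).2 ?_
  simp only [enorm_eq_self, toReal_ofNat, bracket_sq]
  exact finite_integral_one_add_norm (by simp; linarith)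

variable {E : Type*} [NormedAddCommGroup E] {f : ℝ × ℝ → E} {φ : ℝ → ℝ}

/-- The modulus of the space-time Fourier transform of `⟨D_x⟩ˢ u`, where `f` is that of `u`. It is
`ℝ≥0∞`-valued, so that it can be integrated and convolved unconditionally. -/
noncomputable def besselModulus (s : ℝ) (f : ℝ × ℝ → E) (p : ℝ × ℝ) : ℝ≥0∞ :=
  (1 + ‖p.1‖ₑ) ^ s * ‖f p‖ₑ

/-- The Bourgain norm `‖u‖_{X^{s,b}}` attached to the dispersion relation `τ = φ(ξ)`, in terms of
the space-time Fourier transform `f` of `u`; it is `∞` when `u ∉ X^{s,b}`. -/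
noncomputable def bourgainNorm (φ : ℝ → ℝ) (s b : ℝ) (f : ℝ × ℝ → E) : ℝ≥0∞ :=
  eLpNorm (fun p ↦ (1 + ‖p.2 - φ p.1‖ₑ) ^ b * besselModulus s f p) 2 volume

@[fun_prop]
lemma aemeasurable_besselModulus (hf : AEStronglyMeasurable f) (s : ℝ) :
    AEMeasurable (besselModulus s f) :=
  .mul (by fun_prop) hf.enorm

lemma enorm_le_besselModulus {s : ℝ} (hs : 0 < s) (f : ℝ × ℝ → E) (p : ℝ × ℝ) :
    ‖f p‖ₑ ≤ besselModulus s f p :=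
  le_mul_of_one_le_left' <| ENNReal.one_le_rpow le_self_add hs

lemma eLpNorm_besselModulus_le {b : ℝ} (hb : 0 < b) (φ : ℝ → ℝ) (s : ℝ) (f : ℝ × ℝ → E) :
    eLpNorm (besselModulus s f) 2 volume ≤ bourgainNorm φ s b f :=
  eLpNorm_mono_enorm fun p ↦ by
    simpa using le_mul_of_one_le_left' (ENNReal.one_le_rpow le_self_add hb)

lemma lintegral_besselModulus_le (hφ : Measurable φ) (hf : AEStronglyMeasurable f) (r s b : ℝ) :
    ∫⁻ p, besselModulus r f p ≤
      bracketNorm (s - r) * bracketNorm b * bourgainNorm φ s b f := by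
  have bracket_mul (x : ℝ) {t u : ℝ} : (1 + ‖x‖ₑ) ^ t * (1 + ‖x‖ₑ) ^ u = (1 + ‖x‖ₑ) ^ (t + u) :=
    (ENNReal.rpow_add _ _ (by simp) (by simp)).symm
  have factorization (p : ℝ × ℝ) : besselModulus r f p =
      ((1 + ‖p.1‖ₑ) ^ (-(s - r)) * (1 + ‖p.2 - φ p.1‖ₑ) ^ (-b)) *
        ((1 + ‖p.2 - φ p.1‖ₑ) ^ b * besselModulus s f p) := by
    calc besselModulus r f p
      _ = (1 + ‖p.1‖ₑ) ^ (-(s - r) + s) * (1 + ‖p.2 - φ p.1‖ₑ) ^ (-b + b) * ‖f p‖ₑ := by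
        simp [besselModulus]
      _ = _ := by rw [← bracket_mul, ← bracket_mul, besselModulus]; ring
  simp only [factorization]
  refine (lintegral_mul_le_eLpNorm_mul_eLpNorm (by fun_prop) (by fun_prop)).trans_eq ?_
  rw [eLpNorm_mul_comp_sub (g := fun x ↦ (1 + ‖x‖ₑ) ^ (-(s - r)))
    (h := fun x ↦ (1 + ‖x‖ₑ) ^ (-b)) (by fun_prop) (by fun_prop) hφ two_ne_zero ofNat_ne_top]
  rfl

lemma ofReal_integral_eq_bourgainNorm_sq {b : ℝ}
    (hf : Integrable fun p ↦ (1 + |p.1|) ^ 4 * (1 + |p.2 - φ p.1|) ^ (2 * b) * ‖f p‖ ^ 2) :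
    ENNReal.ofReal (∫ p, (1 + |p.1|) ^ 4 * (1 + |p.2 - φ p.1|) ^ (2 * b) * ‖f p‖ ^ 2) =
      bourgainNorm φ 2 b f ^ 2 := by
  rw [ofReal_integral_eq_lintegral_ofReal hf (.of_forall fun p ↦ by positivity), bourgainNorm]
  have eLpNorm_sq (g : ℝ × ℝ → ℝ≥0∞) : eLpNorm g 2 volume ^ 2 = ∫⁻ p, g p ^ 2 := by
    simpa using eLpNorm_nnreal_pow_eq_lintegral (f := g) (two_ne_zero (α := NNReal))
  have ofReal_bracket (x : ℝ) : ENNReal.ofReal (1 + |x|) = 1 + ‖x‖ₑ := by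
    rw [ENNReal.ofReal_add zero_le_one (abs_nonneg x), ENNReal.ofReal_one, Real.enorm_eq_ofReal_abs]
  rw [eLpNorm_sq]
  congr 1 with p
  rw [ENNReal.ofReal_mul (by positivity), ENNReal.ofReal_mul (by positivity),
    ENNReal.ofReal_pow (by positivity), ENNReal.ofReal_pow (by positivity), ofReal_norm,
    ← ENNReal.ofReal_rpow_of_pos (by positivity), ofReal_bracket, ofReal_bracket, besselModulus,
    ENNReal.rpow_ofNat, mul_comm 2 b, ENNReal.rpow_mul, ENNReal.rpow_ofNat]
  ring

end BourgainNorm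

section QuarticEstimate

variable {f : ℝ × ℝ → ℂ} {φ : ℝ → ℝ} {b : ℝ}

lemma enorm_complex_ofReal (x : ℝ) : ‖(x : ℂ)‖ₑ = ‖x‖ₑ := by
  simp only [enorm, Complex.nnnorm_real]

/-- Up to a constant, the space-time Fourier transform of the nonlinearity `F(U)`, where `f` is that
of `U`. -/
noncomputable def commutatorNonlinearity (σ : ℝ) (f : ℝ × ℝ → ℂ) (p : ℝ × ℝ) : ℂ :=
  p.1 * ∫ w : ℝ × ℝ × ℝ × ℝ, (commutatorSymbol σ p.1 w.1 w.2.1 : ℂ) *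
    f (w.1, w.2.2.1) * f (w.2.1, w.2.2.2) * f (p.1 - w.1 - w.2.1, p.2 - w.2.2.1 - w.2.2.2)

/-- The sum of the three ways of distributing two brackets on one factor and one on each of the
others in the trilinear convolution: the majorant of `commutatorNonlinearity`, without its `σ²`. -/
noncomputable def trilinearMajorant (f : ℝ × ℝ → ℂ) : ℝ × ℝ → ℝ≥0∞ :=
  (besselModulus 2 f ⋆ₗ besselModulus 1 f ⋆ₗ besselModulus 1 f) +
    (besselModulus 1 f ⋆ₗ besselModulus 2 f ⋆ₗ besselModulus 1 f) +
    (besselModulus 1 f ⋆ₗ besselModulus 1 f ⋆ₗ besselModulus 2 f)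

@[fun_prop]
lemma aemeasurable_trilinearMajorant (hf : AEStronglyMeasurable f) :
    AEMeasurable (trilinearMajorant f) := by
  unfold trilinearMajorant
  fun_prop

lemma eLpNorm_trilinearMajorant_le (hf : AEStronglyMeasurable f) :
    eLpNorm (trilinearMajorant f) 2 volume ≤
      3 * ((∫⁻ p, besselModulus 1 f p) ^ 2 * eLpNorm (besselModulus 2 f) 2 volume) := by
  have young : eLpNorm (besselModulus 1 f ⋆ₗ besselModulus 1 f ⋆ₗ besselModulus 2 f) 2 volume ≤
      (∫⁻ p, besselModulus 1 f p) ^ 2 * eLpNorm (besselModulus 2 f) 2 volume := by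
    rw [sq]
    exact eLpNorm_lconvolution_lconvolution_le (by fun_prop) (by fun_prop) (by fun_prop)
      one_le_two ofNat_ne_top
  have move_left : besselModulus 1 f ⋆ₗ besselModulus 2 f ⋆ₗ besselModulus 1 f =
      besselModulus 1 f ⋆ₗ besselModulus 1 f ⋆ₗ besselModulus 2 f := by
    rw [lconvolution_comm (f := besselModulus 2 f)]
  have rotate : besselModulus 2 f ⋆ₗ besselModulus 1 f ⋆ₗ besselModulus 1 f =
      besselModulus 1 f ⋆ₗ besselModulus 1 f ⋆ₗ besselModulus 2 f := by
    rw [lconvolution_comm, ← lconvolution_assoc₀ (by fun_prop) (by fun_prop) (by fun_prop)]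
  rw [trilinearMajorant, move_left, rotate]
  set T := besselModulus 1 f ⋆ₗ besselModulus 1 f ⋆ₗ besselModulus 2 f with hT
  have T_measurable : AEStronglyMeasurable T := by rw [hT]; fun_prop
  calc eLpNorm (T + T + T) 2 volume
    _ ≤ eLpNorm T 2 volume + eLpNorm T 2 volume + eLpNorm T 2 volume :=
      (eLpNorm_add_le (by fun_prop) T_measurable one_le_two).trans <|
        add_le_add_left (eLpNorm_add_le T_measurable T_measurable one_le_two) _
    _ = 3 * eLpNorm T 2 volume := by ring
    _ ≤ _ := by gcongr

lemma enorm_commutatorNonlinearity_le (σ : ℝ) (hf : AEStronglyMeasurable f) (p : ℝ × ℝ) :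
    ‖commutatorNonlinearity σ f p‖ₑ ≤ 3 * ‖σ‖ₑ ^ 2 * trilinearMajorant f p := by
  let majorant (r s t : ℝ) (q : (ℝ × ℝ) × (ℝ × ℝ)) : ℝ≥0∞ :=
    besselModulus r f q.1 * besselModulus s f q.2 * besselModulus t f (p - q.1 - q.2)
  have majorant_measurable (r s t : ℝ) : AEMeasurable (majorant r s t) :=
    aemeasurable_mul_mul_comp_sub_sub (by fun_prop) (by fun_prop) (by fun_prop) p
  have lintegral_majorant (r s t : ℝ) : ∫⁻ q, majorant r s t q =
      (besselModulus r f ⋆ₗ besselModulus s f ⋆ₗ besselModulus t f) p :=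
    (lconvolution_lconvolution_apply (by fun_prop) (by fun_prop) (by fun_prop) p).symm
  have integrand_le (q : (ℝ × ℝ) × (ℝ × ℝ)) :
      ‖p.1‖ₑ * ‖commutatorSymbol σ p.1 q.1.1 q.2.1 * f q.1 * f q.2 * f (p - q.1 - q.2)‖ₑ ≤
        3 * ‖σ‖ₑ ^ 2 * (majorant 2 1 1 q + majorant 1 2 1 q + majorant 1 1 2 q) := by
    calc ‖p.1‖ₑ * ‖commutatorSymbol σ p.1 q.1.1 q.2.1 * f q.1 * f q.2 * f (p - q.1 - q.2)‖ₑ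
      _ = ‖p.1‖ₑ * ‖commutatorSymbol σ p.1 q.1.1 q.2.1‖ₑ *
            (‖f q.1‖ₑ * ‖f q.2‖ₑ * ‖f (p - q.1 - q.2)‖ₑ) := by
        simp only [enorm_mul, enorm_complex_ofReal]
        ring
      _ ≤ _ := mul_le_mul_left (enorm_mul_enorm_commutatorSymbol_le σ _ _ _) _
      _ = 3 * ‖σ‖ₑ ^ 2 * (majorant 2 1 1 q + majorant 1 2 1 q + majorant 1 1 2 q) := by
        simp only [majorant, besselModulus, ENNReal.rpow_one, ENNReal.rpow_ofNat, Prod.fst_sub]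
        ring
  calc ‖commutatorNonlinearity σ f p‖ₑ
    _ ≤ ‖p.1‖ₑ * ∫⁻ w : ℝ × ℝ × ℝ × ℝ, ‖commutatorSymbol σ p.1 w.1 w.2.1 * f (w.1, w.2.2.1) *
          f (w.2.1, w.2.2.2) * f (p.1 - w.1 - w.2.1, p.2 - w.2.2.1 - w.2.2.2)‖ₑ := by
      rw [commutatorNonlinearity, enorm_mul, enorm_complex_ofReal]
      gcongr
      exact enorm_integral_le_lintegral_enorm _
    _ = ∫⁻ q : (ℝ × ℝ) × (ℝ × ℝ), ‖p.1‖ₑ *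
          ‖commutatorSymbol σ p.1 q.1.1 q.2.1 * f q.1 * f q.2 * f (p - q.1 - q.2)‖ₑ := by
      rw [lintegral_const_mul' _ _ enorm_ne_top, ← lintegral_prod_prod_prod_comm]
      rfl
    _ ≤ ∫⁻ q, 3 * ‖σ‖ₑ ^ 2 * (majorant 2 1 1 q + majorant 1 2 1 q + majorant 1 1 2 q) :=
      lintegral_mono integrand_le
    _ = 3 * ‖σ‖ₑ ^ 2 * trilinearMajorant f p := by
      rw [lintegral_const_mul' _ _ (by finiteness), lintegral_add_left' (by fun_prop),
        lintegral_add_left' (by fun_prop)]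
      simp only [lintegral_majorant, trilinearMajorant, Pi.add_apply]

lemma enorm_integral_mul_commutatorNonlinearity_le (σ : ℝ) (hf : AEStronglyMeasurable f)
    (p : ℝ × ℝ) :
    ‖∫ q, f (p - q) * commutatorNonlinearity σ f q‖ₑ ≤
      3 * ‖σ‖ₑ ^ 2 * (trilinearMajorant f ⋆ₗ besselModulus 1 f) p := by
  calc ‖∫ q, f (p - q) * commutatorNonlinearity σ f q‖ₑ
    _ ≤ ∫⁻ q, ‖f (p - q)‖ₑ * ‖commutatorNonlinearity σ f q‖ₑ := by
      simpa only [enorm_mul] using enorm_integral_le_lintegral_enorm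
        fun q ↦ f (p - q) * commutatorNonlinearity σ f q
    _ ≤ ∫⁻ q, 3 * ‖σ‖ₑ ^ 2 * (trilinearMajorant f q * besselModulus 1 f (-q + p)) := by
      refine lintegral_mono fun q ↦ ?_
      rw [neg_add_eq_sub, mul_comm ‖f (p - q)‖ₑ, ← mul_assoc]
      exact mul_le_mul' (enorm_commutatorNonlinearity_le σ hf q)
        (enorm_le_besselModulus one_pos f _)
    _ = 3 * ‖σ‖ₑ ^ 2 * (trilinearMajorant f ⋆ₗ besselModulus 1 f) p :=
      lintegral_const_mul' _ _ (by finiteness)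

theorem eLpNorm_integral_mul_commutatorNonlinearity_le (hb : 0 < b) (σ : ℝ) (hφ : Measurable φ)
    (hf : AEStronglyMeasurable f) :
    eLpNorm (fun p ↦ ∫ q, f (p - q) * commutatorNonlinearity σ f q) 2 volume ≤
      9 * (bracketNorm 1 * bracketNorm b) ^ 3 * ‖σ‖ₑ ^ 2 * bourgainNorm φ 2 b f ^ 4 := by
  have l1_le : ∫⁻ p, besselModulus 1 f p ≤
      bracketNorm 1 * bracketNorm b * bourgainNorm φ 2 b f := by
    convert lintegral_besselModulus_le hφ hf 1 2 b using 3
    norm_num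
  have l2_le : eLpNorm (besselModulus 2 f) 2 volume ≤ bourgainNorm φ 2 b f :=
    eLpNorm_besselModulus_le hb φ 2 f
  calc eLpNorm (fun p ↦ ∫ q, f (p - q) * commutatorNonlinearity σ f q) 2 volume
    _ ≤ 3 * ‖σ‖ₑ ^ 2 * eLpNorm (trilinearMajorant f ⋆ₗ besselModulus 1 f) 2 volume :=
      eLpNorm_le_mul_eLpNorm_of_ae_le_mul'' 2 (by fun_prop) <| .of_forall
        (enorm_integral_mul_commutatorNonlinearity_le σ hf)
    _ ≤ 3 * ‖σ‖ₑ ^ 2 * ((∫⁻ p, besselModulus 1 f p) * (3 * ((∫⁻ p, besselModulus 1 f p) ^ 2 *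
          eLpNorm (besselModulus 2 f) 2 volume))) := by
      rw [lconvolution_comm]
      gcongr
      exact (eLpNorm_lconvolution_le (by fun_prop) (by fun_prop) one_le_two ofNat_ne_top).trans
        (mul_le_mul_right (eLpNorm_trilinearMajorant_le hf) _)
    _ ≤ 3 * ‖σ‖ₑ ^ 2 * ((bracketNorm 1 * bracketNorm b * bourgainNorm φ 2 b f) *
          (3 * ((bracketNorm 1 * bracketNorm b * bourgainNorm φ 2 b f) ^ 2 *
            bourgainNorm φ 2 b f))) := by gcongr
    _ = 9 * (bracketNorm 1 * bracketNorm b) ^ 3 * ‖σ‖ₑ ^ 2 * bourgainNorm φ 2 b f ^ 4 := by ring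

end QuarticEstimate

section Schwartz

lemma exists_schwartzMap_eq_fourierIntegral (u : SchwartzMap (ℝ × ℝ) ℂ) :
    ∃ v : SchwartzMap (ℝ × ℝ) ℂ, ∀ p : ℝ × ℝ,
      v p = ∫ q : ℝ × ℝ, Complex.exp (-Complex.I * (q.1 * p.1 + q.2 * p.2)) * u q := by
  let e := WithLp.prodContinuousLinearEquiv 2 ℝ ℝ ℝ
  let rescale : (ℝ × ℝ) ≃L[ℝ] (ℝ × ℝ) :=
    .smulLeft (Units.mk0 (2 * Real.pi)⁻¹ (inv_ne_zero Real.two_pi_pos.ne'))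
  let uHat : SchwartzMap (WithLp 2 (ℝ × ℝ)) ℂ :=
    FourierTransform.fourier (SchwartzMap.compCLMOfContinuousLinearEquiv ℂ e u)
  refine ⟨SchwartzMap.compCLMOfContinuousLinearEquiv ℂ (rescale.trans e.symm) uHat, fun p ↦ ?_⟩
  have inner_rescale (q : ℝ × ℝ) : inner ℝ (WithLp.toLp 2 q) (e.symm (rescale p)) =
      (2 * Real.pi)⁻¹ * (q.1 * p.1 + q.2 * p.2) := by
    have rescale_apply : rescale p = (2 * Real.pi)⁻¹ • p := rfl
    rw [rescale_apply, map_smul, inner_smul_right]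
    simp [e, WithLp.prod_inner_apply, mul_comm]
  have phase (t : ℝ) : 2 * Real.pi * ((2 * Real.pi)⁻¹ * t) = t := by field_simp
  calc uHat (e.symm (rescale p))
    _ = ∫ q : ℝ × ℝ, Complex.exp (↑(-2 * Real.pi *
          inner ℝ (WithLp.toLp 2 q) (e.symm (rescale p))) * Complex.I) • u q := by
      rw [SchwartzMap.fourier_coe, Real.fourier_eq',
        ← (WithLp.volume_preserving_toLp ℝ ℝ).integral_comp
          (MeasurableEquiv.toLp 2 (ℝ × ℝ)).measurableEmbedding]
      rfl
    _ = _ := by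
      congr 1 with q
      rw [inner_rescale, neg_mul, neg_mul, phase, smul_eq_mul]
      push_cast
      ring_nf

lemma integrable_mul_norm_sq_schwartzMap {E F : Type*} [NormedAddCommGroup E] [NormedSpace ℝ E]
    [NormedAddCommGroup F] [NormedSpace ℝ F] [MeasurableSpace E] [BorelSpace E]
    [SecondCountableTopology E] {μ : Measure E} [μ.HasTemperateGrowth] (f : SchwartzMap E F)
    {w : E → ℝ} (hw : AEStronglyMeasurable w μ) {k : ℕ} (hwk : ∀ x, |w x| ≤ (1 + ‖x‖) ^ k) :
    Integrable (fun x ↦ w x * ‖f x‖ ^ 2) μ := by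
  obtain ⟨D, hD⟩ : ∃ D, ∀ x, (1 + ‖x‖) ^ k * ‖f x‖ ≤ D := ⟨_, fun x ↦ by
    simpa using SchwartzMap.one_add_le_sup_seminorm_apply (𝕜 := ℝ) (m := (k, 0)) le_rfl le_rfl f x⟩
  refine (f.integrable.norm.const_mul D).mono'
    (hw.mul (f.continuous.norm.pow 2).aestronglyMeasurable) (.of_forall fun x ↦ ?_)
  calc ‖w x * ‖f x‖ ^ 2‖
    _ = |w x| * ‖f x‖ * ‖f x‖ := by
      rw [norm_mul, norm_pow, norm_norm, Real.norm_eq_abs, sq, mul_assoc]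
    _ ≤ (1 + ‖x‖) ^ k * ‖f x‖ * ‖f x‖ := by gcongr; exact hwk x
    _ ≤ D * ‖f x‖ := by gcongr; exact hD x

lemma one_add_abs_sub_pow_three_le (p : ℝ × ℝ) : 1 + |p.2 - p.1 ^ 3| ≤ (1 + ‖p‖) ^ 3 := by
  have h₁ : |p.1| ≤ ‖p‖ := norm_fst_le p
  have h₂ : |p.2| ≤ ‖p‖ := norm_snd_le p
  calc 1 + |p.2 - p.1 ^ 3|
    _ ≤ 1 + (|p.2| + |p.1| ^ 3) := by rw [← abs_pow]; gcongr; exact abs_sub _ _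
    _ ≤ 1 + (‖p‖ + ‖p‖ ^ 3) := by gcongr
    _ ≤ (1 + ‖p‖) ^ 3 := by nlinarith [norm_nonneg p, sq_nonneg ‖p‖]

lemma integrable_bourgain_weight_schwartzMap (v : SchwartzMap (ℝ × ℝ) ℂ) (b : ℝ) :
    Integrable fun p : ℝ × ℝ ↦
      (1 + |p.1|) ^ 4 * (1 + |p.2 - p.1 ^ 3|) ^ (2 * b) * ‖v p‖ ^ 2 := by
  obtain ⟨k, hk⟩ := exists_nat_ge (2 * b)
  refine integrable_mul_norm_sq_schwartzMap v (k := 4 + 3 * k)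
    (Measurable.aestronglyMeasurable (by fun_prop)) fun p ↦ ?_
  have h₁ : |p.1| ≤ ‖p‖ := norm_fst_le p
  calc |(1 + |p.1|) ^ 4 * (1 + |p.2 - p.1 ^ 3|) ^ (2 * b)|
    _ = (1 + |p.1|) ^ 4 * (1 + |p.2 - p.1 ^ 3|) ^ (2 * b) := abs_of_nonneg (by positivity)
    _ ≤ (1 + ‖p‖) ^ 4 * (1 + |p.2 - p.1 ^ 3|) ^ (k : ℝ) := by
      gcongr
      simp
    _ ≤ (1 + ‖p‖) ^ 4 * ((1 + ‖p‖) ^ 3) ^ k := by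
      rw [Real.rpow_natCast]
      gcongr
      exact one_add_abs_sub_pow_three_le p
    _ = (1 + ‖p‖) ^ (4 + 3 * k) := by rw [pow_add, pow_mul]

end Schwartz

theorem commutator_UL2_est_general {b : ℝ} (hb : 1 / 2 < b) :
    ∃ C > 0, ∀ φ : ℝ → ℝ, Measurable φ → ∀ σ : ℝ, ∀ f : ℝ × ℝ → ℂ, AEStronglyMeasurable f →
      Integrable (fun p : ℝ × ℝ ↦
        (1 + |p.1|) ^ 4 * (1 + |p.2 - φ p.1|) ^ (2 * b) * ‖f p‖ ^ 2) →
      eLpNorm (fun p ↦ ∫ q, f (p - q) * commutatorNonlinearity σ f q) 2 volume ≤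
        ENNReal.ofReal (C * σ ^ 2 *
          (∫ p : ℝ × ℝ, (1 + |p.1|) ^ 4 * (1 + |p.2 - φ p.1|) ^ (2 * b) * ‖f p‖ ^ 2) ^ 2) := by
  have K_ne_top : 9 * (bracketNorm 1 * bracketNorm b) ^ 3 ≠ ∞ := by
    have h₁ := (bracketNorm_lt_top (r := 1) (by norm_num)).ne
    have h_b := (bracketNorm_lt_top hb).ne
    finiteness
  generalize hK : 9 * (bracketNorm 1 * bracketNorm b) ^ 3 = K at K_ne_top
  refine ⟨K.toReal + 1, by positivity, fun φ hφ σ f hf hf_int ↦ ?_⟩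
  refine (eLpNorm_integral_mul_commutatorNonlinearity_le (by linarith) σ hφ hf).trans ?_
  rw [hK, ENNReal.ofReal_mul (by positivity), ENNReal.ofReal_mul (by positivity),
    ENNReal.ofReal_pow (integral_nonneg fun p ↦ by positivity),
    ofReal_integral_eq_bourgainNorm_sq hf_int, ← pow_mul, ← sq_abs σ,
    ENNReal.ofReal_pow (abs_nonneg σ), Real.enorm_eq_ofReal_abs]
  gcongr
  exact (ENNReal.le_ofReal_iff_toReal_le K_ne_top (by positivity)).2 (by linarith)

/-- Estimate (2.8) of Lemma 2.6 of the paper: `‖U F(U)‖_{L²_{x,t}} ≤ C σ² ‖U‖⁴_{X^{2,b}}`,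
stated on the Fourier side via the convolution `û ∗ G`, with `C` independent of `σ`. -/
theorem commutator_UL2_est (b : ℝ) (hb : 1 / 2 < b) :
    ∃ C > 0, ∀ σ : ℝ, 0 < σ → ∀ u : SchwartzMap (ℝ × ℝ) ℂ, ∀ uhat G : ℝ × ℝ → ℂ,
      (∀ p : ℝ × ℝ,
        uhat p = ∫ q : ℝ × ℝ, Complex.exp (-Complex.I * (q.1 * p.1 + q.2 * p.2)) * u q) →
      (∀ ξ τ : ℝ,
        G (ξ, τ) = (ξ : ℂ) * ∫ w : ℝ × ℝ × ℝ × ℝ,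
          (((1 - Real.cosh (σ * |ξ|) * (Real.cosh (σ * |w.1|))⁻¹ *
              (Real.cosh (σ * |w.2.1|))⁻¹ *
              (Real.cosh (σ * |ξ - w.1 - w.2.1|))⁻¹ : ℝ) : ℂ) *
            uhat (w.1, w.2.2.1) * uhat (w.2.1, w.2.2.2) *
            uhat (ξ - w.1 - w.2.1, τ - w.2.2.1 - w.2.2.2))) →
      eLpNorm (fun p : ℝ × ℝ =>
          ∫ q : ℝ × ℝ, uhat (p.1 - q.1, p.2 - q.2) * G q) 2 volume ≤
        ENNReal.ofReal (C * σ ^ 2 *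
          (∫ p : ℝ × ℝ, (1 + |p.1|) ^ 4 * (1 + |p.2 - p.1 ^ 3|) ^ (2 * b) *
            ‖uhat p‖ ^ 2) ^ 2) := by
  obtain ⟨C, hC, estimate⟩ := commutator_UL2_est_general hb
  refine ⟨C, hC, fun σ _ u uhat G hu hG ↦ ?_⟩
  obtain ⟨v, hv⟩ := exists_schwartzMap_eq_fourierIntegral u
  obtain rfl : uhat = v := funext fun p ↦ (hu p).trans (hv p).symm
  obtain rfl : G = commutatorNonlinearity σ v := funext fun p ↦ hG p.1 p.2
  exact estimate (fun ξ ↦ ξ ^ 3) (by fun_prop) σ v v.continuous.aestronglyMeasurable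
    (integrable_bourgain_weight_schwartzMap v b)
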